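/- arXiv:1507.02858 — 11 statements merged into one kernel-verified Lean document; each statement's English description precedes it below -/
import Mathlib

section
/- Let n ≥ 1 and let Z ∈ ℂ^{2n×n} be a normalised Lagrangian frame (ZᵀΩZ = 0 and Z*ΩZ = 2i·Iₙ). Then: (i) Im(ZZ*) = −Ω, i.e. ZZ* = Re(ZZ*) − iΩ; (ii) Re(ZZ*) is a real symmetric, positive definite, symplectic matrix, i.e. Re(ZZ*)ᵀ Ω Re(ZZ*) = Ω, and consequently Re(ZZ*)⁻¹ = Ωᵀ Re(ZZ*) Ω; (iii) Re(ZZ*)·Ω·Z = i·Z and Re(ZZ*)·Ω·Z̄ = −i·Z̄; (iv) (Re(ZZ*)·Ω)² = −I_{2n}. -/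
open Matrix

noncomputable section

/-- The standard symplectic matrix `Ω = [[0, -Iₙ], [Iₙ, 0]]` over `ℝ`. -/
def Omr (n : ℕ) : Matrix (Fin n ⊕ Fin n) (Fin n ⊕ Fin n) ℝ :=
  Matrix.fromBlocks 0 (-1) 1 0

/-- The standard symplectic matrix `Ω = [[0, -Iₙ], [Iₙ, 0]]` over `ℂ`. -/
def Omc (n : ℕ) : Matrix (Fin n ⊕ Fin n) (Fin n ⊕ Fin n) ℂ :=
  Matrix.fromBlocks 0 (-1) 1 0

/-- Entrywise real part of a complex matrix. -/
def reMat {m k : Type*} (M : Matrix m k ℂ) : Matrix m k ℝ :=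
  Matrix.of fun i j => (M i j).re

/-- Entrywise imaginary part of a complex matrix. -/
def imMat {m k : Type*} (M : Matrix m k ℂ) : Matrix m k ℝ :=
  Matrix.of fun i j => (M i j).im

theorem Omc_sq (n : ℕ) : Omc n * Omc n = -1 := by
  simp [Omc, Matrix.fromBlocks_multiply, ← Matrix.fromBlocks_one, Matrix.fromBlocks_neg]

theorem Omr_sq (n : ℕ) : Omr n * Omr n = -1 := by
  simp [Omr, Matrix.fromBlocks_multiply, ← Matrix.fromBlocks_one, Matrix.fromBlocks_neg]

theorem Omr_tr (n : ℕ) : (Omr n)ᵀ = -Omr n := by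
  simp [Omr, Matrix.fromBlocks_transpose, Matrix.fromBlocks_neg]

theorem Omr_map (n : ℕ) : (Omr n).map Complex.ofReal = Omc n := by
  ext i j
  rcases i with i | i <;> rcases j with j | j <;> simp [Omr, Omc, Matrix.one_apply] <;>
    split_ifs <;> simp

theorem Omc_conj (n : ℕ) : (Omc n).map (starRingEnd ℂ) = Omc n := by
  rw [← Omr_map]
  ext i j
  simp

theorem key (n : ℕ) (Z W : Matrix (Fin n ⊕ Fin n) (Fin n) ℂ)
    (h1 : Zᵀ * Omc n * Z = 0)
    (h2 : Zᴴ * Omc n * Z = (2 * Complex.I) • (1 : Matrix (Fin n) (Fin n) ℂ))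
    (h3 : Zᴴ * Omc n * W = 0)
    (h4 : Zᵀ * Omc n * W = -((2 * Complex.I) • (1 : Matrix (Fin n) (Fin n) ℂ))) :
    Z * Zᴴ - W * Zᵀ = -((2 * Complex.I) • Omc n) := by
  have hI : (2 * Complex.I) ≠ 0 := by simp
  have hVU : ((2 * Complex.I)⁻¹ • Matrix.fromRows (Zᴴ * Omc n) (-(Zᵀ * Omc n))) *
      Matrix.fromCols Z W = 1 := by
    rw [Matrix.smul_mul, Matrix.fromRows_mul_fromCols, Matrix.neg_mul, Matrix.neg_mul,
      h1, h2, h3, h4, neg_neg, neg_zero, Matrix.fromBlocks_smul, smul_smul, inv_mul_cancel₀ hI]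
    simp
  have hUV := mul_eq_one_comm.mp hVU
  rw [Matrix.mul_smul, Matrix.fromCols_mul_fromRows] at hUV
  have h5 := congrArg (fun M => ((2 * Complex.I) • M) * Omc n) hUV
  simp only [smul_smul, mul_inv_cancel₀ hI, one_smul, Matrix.mul_neg, Matrix.add_mul,
    Matrix.neg_mul, Matrix.mul_assoc, Omc_sq, Matrix.smul_mul, Matrix.one_mul,
    Matrix.mul_one, neg_neg] at h5
  rw [← h5]
  abel

theorem re_psd (n : ℕ) (Z : Matrix (Fin n ⊕ Fin n) (Fin n) ℂ) :
    (reMat (Z * Zᴴ)).PosSemidef := by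
  have h : reMat (Z * Zᴴ) = reMat Z * (reMat Z)ᴴ + imMat Z * (imMat Z)ᴴ := by
    ext i j
    simp [reMat, imMat, Matrix.mul_apply, Finset.sum_add_distrib]
  rw [h]
  exact (Matrix.posSemidef_self_mul_conjTranspose _).add
    (Matrix.posSemidef_self_mul_conjTranspose _)

theorem stmt2 (n : ℕ) (hn : 1 ≤ n)
    (Z : Matrix (Fin n ⊕ Fin n) (Fin n) ℂ)
    (hiso : Zᵀ * Omc n * Z = 0)
    (hnorm : Zᴴ * Omc n * Z = (2 * Complex.I) • (1 : Matrix (Fin n) (Fin n) ℂ)) :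
    -- (i) Im(ZZ*) = -Ω, i.e. ZZ* = Re(ZZ*) - iΩ
    (imMat (Z * Zᴴ) = -(Omr n)) ∧
    (Z * Zᴴ = (reMat (Z * Zᴴ)).map Complex.ofReal - Complex.I • Omc n) ∧
    -- (ii) Re(ZZ*) is real symmetric, positive definite, symplectic
    ((reMat (Z * Zᴴ))ᵀ = reMat (Z * Zᴴ)) ∧
    (reMat (Z * Zᴴ)).PosDef ∧
    ((reMat (Z * Zᴴ))ᵀ * Omr n * reMat (Z * Zᴴ) = Omr n) ∧
    ((reMat (Z * Zᴴ))⁻¹ = (Omr n)ᵀ * reMat (Z * Zᴴ) * Omr n) ∧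
    -- (iii) Re(ZZ*)·Ω·Z = i·Z and Re(ZZ*)·Ω·Z̄ = -i·Z̄
    ((reMat (Z * Zᴴ)).map Complex.ofReal * Omc n * Z = Complex.I • Z) ∧
    ((reMat (Z * Zᴴ)).map Complex.ofReal * Omc n * Z.map (starRingEnd ℂ) =
      (-Complex.I) • Z.map (starRingEnd ℂ)) ∧
    -- (iv) (Re(ZZ*)·Ω)² = -I
    ((reMat (Z * Zᴴ) * Omr n) * (reMat (Z * Zᴴ) * Omr n) = -1) := by
  have hc1 : Zᴴ * Omc n * Z.map (starRingEnd ℂ) = 0 := by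
    have := congrArg (fun M => M.map (starRingEnd ℂ)) hiso
    simp only [Matrix.map_mul, Omc_conj] at this
    rw [Matrix.map_zero _ (map_zero _)] at this
    exact this
  have hc2 : Zᵀ * Omc n * Z.map (starRingEnd ℂ) =
      -((2 * Complex.I) • (1 : Matrix (Fin n) (Fin n) ℂ)) := by
    have := congrArg (fun M => M.map (starRingEnd ℂ)) hnorm
    simp only [Matrix.map_mul, Omc_conj] at this
    have e1 : (Zᴴ).map (starRingEnd ℂ) = Zᵀ := by ext i j; simp
    rw [e1] at this
    rw [this]
    ext i j
    have e2 : (starRingEnd ℂ) 2 = 2 := Complex.conj_ofNat 2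
    by_cases hij : i = j <;> simp [hij, e2]
  have hk := key n Z _ hiso hnorm hc1 hc2
  have him : imMat (Z * Zᴴ) = -(Omr n) := by
    ext i j
    have hij := congrFun (congrFun hk i) j
    have e : (Z.map (starRingEnd ℂ) * Zᵀ) i j = (starRingEnd ℂ) ((Z * Zᴴ) i j) := by
      simp [Matrix.mul_apply]
    rw [Matrix.sub_apply, e, ← Omr_map] at hij
    have h2 := congrArg Complex.im hij
    simp at h2
    simp only [imMat, Matrix.of_apply, Matrix.neg_apply]
    linarith
  have hZ : Z * Zᴴ = (reMat (Z * Zᴴ)).map Complex.ofReal - Complex.I • Omc n := by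
    ext i j
    have hij : ((Z * Zᴴ) i j).im = -(Omr n i j) := congrFun (congrFun him i) j
    rw [← Omr_map]
    apply Complex.ext
    · simp [reMat]
    · simp [reMat, hij]
  have hpsd := re_psd n Z
  have hsym : (reMat (Z * Zᴴ))ᵀ = reMat (Z * Zᴴ) := by
    have := hpsd.1
    rwa [Matrix.IsHermitian, Matrix.conjTranspose_eq_transpose_of_trivial] at this
  have hR : (reMat (Z * Zᴴ)).map Complex.ofReal = Z * Zᴴ + Complex.I • Omc n := by
    conv_rhs => rw [hZ]
    abel
  have hRJ : (reMat (Z * Zᴴ)).map Complex.ofReal * Omc n =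
      Z * (Zᴴ * Omc n) - Complex.I • 1 := by
    rw [hR, Matrix.add_mul, Matrix.smul_mul, Omc_sq, Matrix.mul_assoc, smul_neg, sub_eq_add_neg]
  have h3a : (reMat (Z * Zᴴ)).map Complex.ofReal * Omc n * Z = Complex.I • Z := by
    rw [hRJ, Matrix.sub_mul, Matrix.mul_assoc, hnorm, Matrix.mul_smul, Matrix.mul_one,
      Matrix.smul_mul, Matrix.one_mul, ← sub_smul]
    congr 1; ring
  have h3b : (reMat (Z * Zᴴ)).map Complex.ofReal * Omc n * Z.map (starRingEnd ℂ) =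
      (-Complex.I) • Z.map (starRingEnd ℂ) := by
    rw [hRJ, Matrix.sub_mul, Matrix.mul_assoc, hc1, Matrix.mul_zero,
      Matrix.smul_mul, Matrix.one_mul, zero_sub, neg_smul]
  have h4c : ((reMat (Z * Zᴴ)).map Complex.ofReal * Omc n) *
      ((reMat (Z * Zᴴ)).map Complex.ofReal * Omc n) = -1 := by
    conv_lhs => rw [hRJ]
    rw [← hRJ]
    conv_lhs => enter [2]; rw [hRJ]
    rw [Matrix.mul_sub, ← Matrix.mul_assoc, h3a, Matrix.mul_smul, Matrix.mul_one, hRJ,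
      Matrix.smul_mul, smul_sub, smul_smul, Complex.I_mul_I, neg_one_smul]
    abel
  have h4 : (reMat (Z * Zᴴ) * Omr n) * (reMat (Z * Zᴴ) * Omr n) = -1 := by
    apply Matrix.map_injective Complex.ofReal_injective
    have e : ∀ A B : Matrix (Fin n ⊕ Fin n) (Fin n ⊕ Fin n) ℝ,
        (A * B).map Complex.ofReal = A.map Complex.ofReal * B.map Complex.ofReal :=
      fun A B => Matrix.map_mul (f := Complex.ofRealHom)
    beta_reduce
    rw [e, e, Omr_map, h4c]
    ext i j
    by_cases hij : i = j <;> simp [hij]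
  have hinv : reMat (Z * Zᴴ) * ((Omr n)ᵀ * reMat (Z * Zᴴ) * Omr n) = 1 := by
    rw [Omr_tr]
    simp only [Matrix.neg_mul, Matrix.mul_neg, Matrix.mul_assoc] at h4 ⊢
    rw [h4, neg_neg]
  refine ⟨him, hZ, hsym, ?_, ?_, Matrix.inv_eq_right_inv hinv, h3a, h3b, h4⟩
  · exact hpsd.posDef_iff_isUnit.mpr (IsUnit.of_mul_eq_one _ hinv)
  · rw [hsym]
    have := congrArg (fun M => -(M * Omr n)) h4
    simp only [Matrix.mul_assoc, Omr_sq] at this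
    simpa [Matrix.mul_assoc] using this
end
end

section
/- Let n ≥ 1 and suppose G ∈ ℝ^{2n×2n} is symmetric, positive definite and symplectic (GᵀΩG = Ω). Then there exist vectors u₁, …, uₙ, v₁, …, vₙ ∈ ℝ^{2n} forming a basis of ℝ^{2n} and real numbers λ₁, …, λₙ with λₖ ≥ 1 such that: G uₖ = λₖ uₖ and G vₖ = λₖ⁻¹ vₖ for all k = 1, …, n; and for all j, k = 1, …, n: uⱼ·uₖ = δ_{jk}, vⱼ·vₖ = δ_{jk}, vⱼ·Ωuₖ = δ_{jk}, uⱼ·Ωuₖ = 0 and vⱼ·Ωvₖ = 0. -/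
open Matrix

noncomputable section

theorem aux_step {E : Type*} [NormedAddCommGroup E] [InnerProductSpace ℝ E]
    [FiniteDimensional ℝ E] (n : ℕ) (hE : Module.finrank ℝ E = 2 * n)
    (T J : E →ₗ[ℝ] E) (hT : T.IsSymmetric) (hp : ∀ x, x ≠ 0 → 0 < inner ℝ x (T x))
    (hJ : ∀ x y, inner ℝ (J x) y = - inner ℝ x (J y)) (hJJ : ∀ x, J (J x) = -x)
    (hTJ : ∀ x, T (J (T x)) = J x) (m : ℕ) (hm : m ≤ n) :
    ∃ (u : Fin m → E) (lam : Fin m → ℝ), (∀ k, 1 ≤ lam k) ∧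
      (∀ k, T (u k) = lam k • u k) ∧
      (∀ j k, inner ℝ (u j) (u k) = if j = k then (1:ℝ) else 0) ∧
      (∀ j k, inner ℝ (u j) (J (u k)) = (0:ℝ)) := by
  induction m with
  | zero => exact ⟨Fin.elim0, Fin.elim0, by simp, by simp, by simp, by simp⟩
  | succ m ih =>
    obtain ⟨u, lam, h1, h2, h3, h4⟩ := ih (by omega)
    have eigJ : ∀ (x : E) (μ : ℝ), μ ≠ 0 → T x = μ • x → T (J x) = μ⁻¹ • J x := by
      intro x μ hμ hx
      have := hTJ x
      rw [hx, map_smul, map_smul] at this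
      exact (eq_inv_smul_iff₀ hμ).2 this
    let S := Submodule.span ℝ (Set.range (Sum.elim u (fun k => J (u k))))
    have hS : Module.finrank ℝ S ≤ 2 * m := by
      have := finrank_range_le_card (R := ℝ) (Sum.elim u (fun k => J (u k)))
      simp only [Fintype.card_sum, Fintype.card_fin] at this
      unfold Set.finrank at this
      change Module.finrank ℝ S ≤ _ at this
      omega
    have hW : ∀ x, x ∈ Sᗮ ↔ ∀ k, inner ℝ (u k) x = (0:ℝ) ∧ inner ℝ (J (u k)) x = (0:ℝ) := by
      intro x
      constructor
      · intro hx k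
        rw [Submodule.mem_orthogonal] at hx
        exact ⟨hx _ (Submodule.subset_span ⟨Sum.inl k, rfl⟩),
          hx _ (Submodule.subset_span ⟨Sum.inr k, rfl⟩)⟩
      · intro hx
        rw [Submodule.mem_orthogonal]
        intro y hy
        induction hy using Submodule.span_induction with
        | mem y hy =>
          obtain ⟨k | k, rfl⟩ := hy
          · exact (hx k).1
          · exact (hx k).2
        | zero => simp
        | add a b _ _ ha hb => rw [inner_add_left, ha, hb, add_zero]
        | smul c a _ ha => rw [inner_smul_left, ha, mul_zero]
    have hTW : ∀ x ∈ Sᗮ, T x ∈ Sᗮ := by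
      intro x hx
      rw [hW] at hx ⊢
      intro k
      have e := eigJ (u k) (lam k) (by linarith [h1 k]) (h2 k)
      rw [← hT, ← hT, h2, e, inner_smul_left, inner_smul_left, (hx k).1, (hx k).2]
      simp
    have hJW : ∀ x ∈ Sᗮ, J x ∈ Sᗮ := by
      intro x hx
      rw [hW] at hx ⊢
      intro k
      have a := hJ (u k) x
      have b := hJ (J (u k)) x
      rw [hJJ, inner_neg_left] at b
      constructor <;> linarith [(hx k).1, (hx k).2]
    have hdim := S.finrank_add_finrank_orthogonal
    have : Nontrivial Sᗮ := by
      apply Module.nontrivial_of_finrank_pos (R := ℝ)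
      omega
    have hev := (hT.restrict_invariant hTW).hasEigenvalue_iSup_of_finiteDimensional
    obtain ⟨⟨x, hxW⟩, hx⟩ := hev.exists_hasEigenvector
    generalize (iSup _ : ℝ) = μ at hx
    have hx0 : x ≠ 0 := fun h => hx.2 (by simpa using h)
    have hTx : T x = μ • x := by
      have := congrArg Subtype.val hx.apply_eq_smul
      simpa using this
    have hμ : 0 < μ := by
      have := hp x hx0
      rw [hTx, inner_smul_right] at this
      exact pos_of_mul_pos_left this real_inner_self_nonneg
    have hJx0 : J x ≠ 0 := by
      intro h
      have := hJJ x
      rw [h, map_zero] at this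
      exact hx0 (by simpa using this.symm)
    obtain ⟨y, ν, hyW, hy0, hTy, hν⟩ : ∃ (y : E) (ν : ℝ), y ∈ Sᗮ ∧ y ≠ 0 ∧ T y = ν • y ∧ 1 ≤ ν := by
      by_cases h : 1 ≤ μ
      · exact ⟨x, μ, hxW, hx0, hTx, h⟩
      · exact ⟨J x, μ⁻¹, hJW x hxW, hJx0, eigJ x μ hμ.ne' hTx,
          (one_le_inv₀ hμ).2 (not_le.1 h).le⟩
    obtain ⟨z, hzW, hz1, hTz⟩ : ∃ z, z ∈ Sᗮ ∧ inner ℝ z z = (1:ℝ) ∧ T z = ν • z := by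
      refine ⟨‖y‖⁻¹ • y, Submodule.smul_mem _ _ hyW, ?_, ?_⟩
      · have := norm_ne_zero_iff.2 hy0
        rw [inner_smul_left, inner_smul_right, real_inner_self_eq_norm_sq]
        simp only [conj_trivial]
        field_simp
      · rw [map_smul, hTy, smul_comm]
    have hz := (hW z).1 hzW
    have hzJ : inner ℝ z (J z) = (0:ℝ) := by
      have := hJ z z
      rw [real_inner_comm] at this
      linarith
    refine ⟨Fin.cons z u, Fin.cons ν lam, ?_, ?_, ?_, ?_⟩
    · intro k; cases k using Fin.cases <;> simp [hν, h1]
    · intro k; cases k using Fin.cases <;> simp [hTz, h2]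
    · intro j k
      cases j using Fin.cases <;> cases k using Fin.cases
      · simp only [Fin.cons_zero, hz1, if_true]
      · rw [real_inner_comm]; simp [hz, (Fin.succ_ne_zero _).symm]
      · simp [hz]
      · simp [h3]
    · intro j k
      cases j using Fin.cases <;> cases k using Fin.cases
      · simpa using hzJ
      · rw [real_inner_comm]; simp [hz]
      · rename_i i
        have := hJ (u i) z
        simp only [Fin.cons_zero, Fin.cons_succ]
        linarith [(hz i).2]
      · simp [h4]

theorem Omr_T (n : ℕ) : (Omr n)ᵀ = - Omr n := by
  simp [Omr, Matrix.fromBlocks_transpose, Matrix.fromBlocks_neg]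

theorem Omr_skew (n : ℕ) (x y : Fin n ⊕ Fin n → ℝ) :
    (Omr n *ᵥ x) ⬝ᵥ y = - (x ⬝ᵥ (Omr n *ᵥ y)) := by
  rw [dotProduct_comm, dotProduct_mulVec, ← mulVec_transpose, Omr_T, neg_mulVec, neg_dotProduct,
    dotProduct_comm]

theorem Omr_Omr (n : ℕ) (x : Fin n ⊕ Fin n → ℝ) : Omr n *ᵥ (Omr n *ᵥ x) = - x := by
  rw [mulVec_mulVec, Omr_sq, neg_mulVec, one_mulVec]

theorem stmt3 (n : ℕ) (hn : 1 ≤ n)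
    (G : Matrix (Fin n ⊕ Fin n) (Fin n ⊕ Fin n) ℝ)
    (hsymm : Gᵀ = G) (hpos : G.PosDef)
    (hsymp : Gᵀ * Omr n * G = Omr n) :
    ∃ (u v : Fin n → (Fin n ⊕ Fin n → ℝ)) (lam : Fin n → ℝ),
      -- u₁, …, uₙ, v₁, …, vₙ form a basis of ℝ^{2n}
      LinearIndependent ℝ (Sum.elim u v) ∧
      Submodule.span ℝ (Set.range (Sum.elim u v)) = ⊤ ∧
      -- eigenvalues λₖ ≥ 1
      (∀ k, 1 ≤ lam k) ∧
      (∀ k, G *ᵥ u k = lam k • u k) ∧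
      (∀ k, G *ᵥ v k = (lam k)⁻¹ • v k) ∧
      -- orthogonality relations
      (∀ j k, u j ⬝ᵥ u k = if j = k then 1 else 0) ∧
      (∀ j k, v j ⬝ᵥ v k = if j = k then 1 else 0) ∧
      (∀ j k, v j ⬝ᵥ (Omr n *ᵥ u k) = if j = k then 1 else 0) ∧
      (∀ j k, u j ⬝ᵥ (Omr n *ᵥ u k) = 0) ∧
      (∀ j k, v j ⬝ᵥ (Omr n *ᵥ v k) = 0) := by
  have key : ∀ x, G *ᵥ (Omr n *ᵥ (G *ᵥ x)) = Omr n *ᵥ x := by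
    intro x
    rw [hsymm] at hsymp
    rw [mulVec_mulVec, mulVec_mulVec, hsymp]
  have hin : ∀ x y : EuclideanSpace ℝ (Fin n ⊕ Fin n),
      inner ℝ x y = WithLp.ofLp x ⬝ᵥ WithLp.ofLp y := by
    intro x y
    rw [EuclideanSpace.inner_eq_star_dotProduct, dotProduct_comm]; simp
  obtain ⟨u, lam, h1, h2, h3, h4⟩ := aux_step (E := EuclideanSpace ℝ (Fin n ⊕ Fin n)) n
    (by simp; ring) (Matrix.toEuclideanLin G) (Matrix.toEuclideanLin (Omr n))
    (by
      intro x y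
      rw [hin, hin]
      simp only [Matrix.ofLp_toEuclideanLin_apply]
      rw [dotProduct_mulVec, ← mulVec_transpose, hsymm])
    (by
      intro x hx
      rw [hin]
      have := hpos.dotProduct_mulVec_pos (x := WithLp.ofLp x) (by simpa using hx)
      simpa using this)
    (by
      intro x y
      rw [hin, hin]
      exact Omr_skew n _ _)
    (by
      intro x
      apply WithLp.ofLp_injective
      exact Omr_Omr n _)
    (by
      intro x
      apply WithLp.ofLp_injective
      exact key _) n le_rfl
  simp only [hin, Matrix.ofLp_toEuclideanLin_apply] at h3 h4
  have h2' : ∀ k, G *ᵥ WithLp.ofLp (u k) = lam k • WithLp.ofLp (u k) := fun k =>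
    congrArg WithLp.ofLp (h2 k)
  have h5 : ∀ j k, (Omr n *ᵥ WithLp.ofLp (u j)) ⬝ᵥ (Omr n *ᵥ WithLp.ofLp (u k))
      = if j = k then 1 else 0 := by
    intro j k
    rw [Omr_skew, Omr_Omr, dotProduct_neg, neg_neg, h3]
  have h6 : ∀ j k, (Omr n *ᵥ WithLp.ofLp (u j)) ⬝ᵥ WithLp.ofLp (u k) = 0 := by
    intro j k
    rw [Omr_skew, h4, neg_zero]
  have hli : LinearIndependent ℝ (Sum.elim (fun k => WithLp.ofLp (u k))
      (fun k => Omr n *ᵥ WithLp.ofLp (u k))) := by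
    rw [Fintype.linearIndependent_iff]
    intro g hg i
    have hd := fun w : Fin n ⊕ Fin n → ℝ => congrArg (fun z => w ⬝ᵥ z) hg
    simp only [Fintype.sum_sum_type, Sum.elim_inl, Sum.elim_inr, dotProduct_add, dotProduct_sum,
      dotProduct_smul, dotProduct_zero] at hd
    rcases i with i | i
    · simpa [h3, h4] using hd (WithLp.ofLp (u i))
    · simpa [h5, h6] using hd (Omr n *ᵥ WithLp.ofLp (u i))
  refine ⟨fun k => WithLp.ofLp (u k), fun k => Omr n *ᵥ WithLp.ofLp (u k), lam, hli,
    ?_, h1, h2', ?_, h3, h5, h5, h4, ?_⟩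
  · have : Nonempty (Fin n ⊕ Fin n) := ⟨Sum.inl ⟨0, hn⟩⟩
    exact hli.span_eq_top_of_card_eq_finrank (by simp)
  · intro k
    have := key (WithLp.ofLp (u k))
    have hl : lam k ≠ 0 := by linarith [h1 k]
    rw [h2', mulVec_smul, mulVec_smul] at this
    exact (eq_inv_smul_iff₀ hl).2 this
  · intro j k
    rw [Omr_Omr, dotProduct_neg, h6, neg_zero]
end
end

section
/- Let n ≥ 1 and let G ∈ ℝ^{2n×2n} be symmetric, positive definite and symplectic. Let u₁, …, uₙ, v₁, …, vₙ ∈ ℝ^{2n} and λ₁, …, λₙ ≥ 1 satisfy: G uₖ = λₖ uₖ, G vₖ = λₖ⁻¹ vₖ, and for all j, k: uⱼ·uₖ = δ_{jk}, vⱼ·vₖ = δ_{jk}, vⱼ·Ωuₖ = δ_{jk}, uⱼ·Ωuₖ = 0, vⱼ·Ωvₖ = 0. Define lₖ := λₖ^{−1/2} uₖ − i λₖ^{1/2} vₖ ∈ ℂ^{2n} for k = 1, …, n, and let Z ∈ ℂ^{2n×n} be the matrix with columns l₁, …, lₙ. Then Z is a normalised Lagrangian frame (ZᵀΩZ = 0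 and Z*ΩZ = 2i·Iₙ), Re(ZZ*) = G⁻¹, and G = Ωᵀ Re(ZZ*) Ω. -/
open Matrix

noncomputable section

theorem stmt4 (n : ℕ) (hn : 1 ≤ n)
    (G : Matrix (Fin n ⊕ Fin n) (Fin n ⊕ Fin n) ℝ)
    (hsymm : Gᵀ = G) (hpos : G.PosDef)
    (hsymp : Gᵀ * Omr n * G = Omr n)
    (u v : Fin n → (Fin n ⊕ Fin n → ℝ)) (lam : Fin n → ℝ)
    (hlam : ∀ k, 1 ≤ lam k)
    (hGu : ∀ k, G *ᵥ u k = lam k • u k)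
    (hGv : ∀ k, G *ᵥ v k = (lam k)⁻¹ • v k)
    (huu : ∀ j k, u j ⬝ᵥ u k = if j = k then 1 else 0)
    (hvv : ∀ j k, v j ⬝ᵥ v k = if j = k then 1 else 0)
    (hvOu : ∀ j k, v j ⬝ᵥ (Omr n *ᵥ u k) = if j = k then 1 else 0)
    (huOu : ∀ j k, u j ⬝ᵥ (Omr n *ᵥ u k) = 0)
    (hvOv : ∀ j k, v j ⬝ᵥ (Omr n *ᵥ v k) = 0) :
    -- Z has columns lₖ = λₖ^{-1/2} uₖ - i λₖ^{1/2} vₖ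
    let Z : Matrix (Fin n ⊕ Fin n) (Fin n) ℂ :=
      Matrix.of fun i k =>
        ((Real.sqrt (lam k))⁻¹ * u k i : ℝ) - Complex.I * ((Real.sqrt (lam k) * v k i : ℝ) : ℂ)
    -- Z is a normalised Lagrangian frame
    (Zᵀ * Omc n * Z = 0) ∧
    (Zᴴ * Omc n * Z = (2 * Complex.I) • (1 : Matrix (Fin n) (Fin n) ℂ)) ∧
    -- Re(ZZ*) = G⁻¹ and G = Ωᵀ Re(ZZ*) Ω
    (reMat (Z * Zᴴ) = G⁻¹) ∧
    (G = (Omr n)ᵀ * reMat (Z * Zᴴ) * Omr n) := by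
  intro Z
  set s : Fin n → ℝ := fun k => Real.sqrt (lam k) with hs
  have hs0 : ∀ k, s k ≠ 0 := fun k =>
    (Real.sqrt_pos.mpr (lt_of_lt_of_le one_pos (hlam k))).ne'
  have hss : ∀ k, s k * s k = lam k := fun k =>
    Real.mul_self_sqrt (le_trans zero_le_one (hlam k))
  let A : Matrix (Fin n ⊕ Fin n) (Fin n) ℝ := Matrix.of fun i k => u k i
  let B : Matrix (Fin n ⊕ Fin n) (Fin n) ℝ := Matrix.of fun i k => v k i
  let D : Matrix (Fin n) (Fin n) ℝ := diagonal s
  let E : Matrix (Fin n) (Fin n) ℝ := diagonal (fun k => (s k)⁻¹)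
  have hDE : D * E = 1 := by
    simp only [D, E, diagonal_mul_diagonal, mul_inv_cancel₀ (hs0 _), diagonal_one]
  have hED : E * D = 1 := by
    simp only [D, E, diagonal_mul_diagonal, inv_mul_cancel₀ (hs0 _), diagonal_one]
  have hDt : Dᵀ = D := diagonal_transpose _
  have hEt : Eᵀ = E := diagonal_transpose _
  have hOt : (Omr n)ᵀ = - Omr n := by
    simp [Omr, fromBlocks_transpose, fromBlocks_neg]
  have hOO : Omr n * Omr n = -1 := by
    simp [Omr, fromBlocks_multiply, ← fromBlocks_one, fromBlocks_neg]
  have key : ∀ (x y : Fin n → (Fin n ⊕ Fin n → ℝ)) (j k : Fin n),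
      ((Matrix.of fun i k => x k i)ᵀ * Omr n * (Matrix.of fun i k => y k i) :
        Matrix (Fin n) (Fin n) ℝ) j k = x j ⬝ᵥ (Omr n *ᵥ y k) := by
    intro x y j k
    rw [Matrix.mul_assoc]
    rfl
  have hAOA : Aᵀ * Omr n * A = 0 := by
    ext j k; rw [key, huOu]; rfl
  have hBOB : Bᵀ * Omr n * B = 0 := by
    ext j k; rw [key, hvOv]; rfl
  have hBOA : Bᵀ * Omr n * A = 1 := by
    ext j k; rw [key, hvOu, Matrix.one_apply]
  have hAOB : Aᵀ * Omr n * B = -1 := by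
    have := congrArg Matrix.transpose hBOA
    rw [transpose_mul, transpose_mul, transpose_transpose, hOt, transpose_one] at this
    rw [← this]; simp [Matrix.mul_assoc]
  have hAA : Aᵀ * A = 1 := by
    ext j k; rw [Matrix.one_apply, ← huu j k]; rfl
  have hBB : Bᵀ * B = 1 := by
    ext j k; rw [Matrix.one_apply, ← hvv j k]; rfl
  have hB : B = Omr n * A := by
    have h : (B - Omr n * A)ᵀ * (B - Omr n * A) = 0 := by
      have e1 : Aᵀ * (Omr n * B) = -1 := by rw [← Matrix.mul_assoc, hAOB]
      have e2 : Bᵀ * (Omr n * A) = 1 := by rw [← Matrix.mul_assoc, hBOA]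
      have e3 : Omr n * (Omr n * A) = - A := by rw [← Matrix.mul_assoc, hOO]; simp
      rw [transpose_sub, transpose_mul, hOt]
      simp only [Matrix.sub_mul, Matrix.mul_sub, Matrix.mul_neg, Matrix.neg_mul, Matrix.mul_assoc,
        e1, e2, e3, hAA, hBB]
      simp
    have h2 : (B - Omr n * A)ᴴ * (B - Omr n * A) = 0 := by
      rw [conjTranspose_eq_transpose_of_trivial]; exact h
    exact sub_eq_zero.mp (conjTranspose_mul_self_eq_zero.mp h2)
  have hAB : Aᵀ * B = 0 := by rw [hB, ← Matrix.mul_assoc, hAOA]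
  have hBA : Bᵀ * A = 0 := by
    have := congrArg Matrix.transpose hAB
    rwa [transpose_mul, transpose_transpose, transpose_zero] at this
  have hP : A * Aᵀ + B * Bᵀ = 1 := by
    rw [← fromCols_mul_fromRows, mul_eq_one_comm, fromRows_mul_fromCols, hAA, hAB, hBA, hBB,
      fromBlocks_one]
  have hGA : G * A = A * (D * D) := by
    ext i k
    have := congrFun (hGu k) i
    simp only [D, diagonal_mul_diagonal, mul_diagonal, hss]
    rw [mul_comm]; exact this
  have hGB : G * B = B * (E * E) := by
    ext i k
    have := congrFun (hGv k) i
    simp only [E, diagonal_mul_diagonal, mul_diagonal, ← mul_inv, hss]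
    rw [mul_comm]; exact this
  let A' := A * E
  let B' := B * D
  have hZ : Z = A'.map Complex.ofReal - Complex.I • B'.map Complex.ofReal := by
    ext i k
    simp [Z, A', B', A, B, D, E, mul_diagonal, mul_comm, s]
  have hOm : Omc n = (Omr n).map Complex.ofReal := by
    simp only [Omc, Omr, fromBlocks_map]
    congr 1 <;> ext i j <;> simp [Matrix.one_apply, apply_ite]
  have hm : ∀ {a b c : Type} [Fintype b] (M : Matrix a b ℝ) (N : Matrix b c ℝ),
      M.map Complex.ofReal * N.map Complex.ofReal = (M * N).map Complex.ofReal := by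
    intro a b c _ M N
    exact (Matrix.map_mul (f := Complex.ofRealHom)).symm
  have hct : ∀ {a b : Type} (M : Matrix a b ℝ),
      (M.map Complex.ofReal)ᴴ = Mᵀ.map Complex.ofReal := by
    intro a b M; ext i j; simp
  have f1 : A'ᵀ * Omr n * A' = 0 := by
    have : A'ᵀ * Omr n * A' = E * (Aᵀ * Omr n * A) * E := by
      simp only [A', transpose_mul, hEt, Matrix.mul_assoc]
    rw [this, hAOA]; simp
  have f2 : B'ᵀ * Omr n * B' = 0 := by
    have : B'ᵀ * Omr n * B' = D * (Bᵀ * Omr n * B) * D := by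
      simp only [B', transpose_mul, hDt, Matrix.mul_assoc]
    rw [this, hBOB]; simp
  have f3 : B'ᵀ * Omr n * A' = 1 := by
    have : B'ᵀ * Omr n * A' = D * (Bᵀ * Omr n * A) * E := by
      simp only [A', B', transpose_mul, hDt, Matrix.mul_assoc]
    rw [this, hBOA]; simp [hDE]
  have f4 : A'ᵀ * Omr n * B' = -1 := by
    have : A'ᵀ * Omr n * B' = E * (Aᵀ * Omr n * B) * D := by
      simp only [A', B', transpose_mul, hEt, Matrix.mul_assoc]
    rw [this, hAOB]; simp [hED]
  have hone : (1 : Matrix (Fin n) (Fin n) ℝ).map Complex.ofReal = 1 := by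
    ext i j; simp [Matrix.one_apply, apply_ite]
  have hneg : (-1 : Matrix (Fin n) (Fin n) ℝ).map Complex.ofReal = -1 := by
    ext i j; simp [Matrix.one_apply, apply_ite]
  have hzero : (0 : Matrix (Fin n) (Fin n) ℝ).map Complex.ofReal = 0 := by
    ext i j; simp
  have hR : reMat (Z * Zᴴ) = A' * A'ᵀ + B' * B'ᵀ := by
    rw [hZ, conjTranspose_sub, conjTranspose_smul, hct, hct]
    simp only [Matrix.sub_mul, Matrix.mul_sub, Matrix.smul_mul, Matrix.mul_smul, hm]
    ext i j
    simp [reMat]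
  have hGR : G * reMat (Z * Zᴴ) = 1 := by
    have g1 : G * (A' * A'ᵀ) = A * Aᵀ := by
      have : G * (A' * A'ᵀ) = (G * A) * (E * E) * Aᵀ := by
        simp only [A', transpose_mul, hEt, Matrix.mul_assoc]
      rw [this, hGA]
      have : A * (D * D) * (E * E) = A * (D * (D * E) * E) := by simp only [Matrix.mul_assoc]
      rw [this, hDE, Matrix.mul_one, hDE, Matrix.mul_one]
    have g2 : G * (B' * B'ᵀ) = B * Bᵀ := by
      have : G * (B' * B'ᵀ) = (G * B) * (D * D) * Bᵀ := by
        simp only [B', transpose_mul, hDt, Matrix.mul_assoc]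
      rw [this, hGB]
      have : B * (E * E) * (D * D) = B * (E * (E * D) * D) := by simp only [Matrix.mul_assoc]
      rw [this, hED, Matrix.mul_one, hED, Matrix.mul_one]
    rw [hR, Matrix.mul_add, g1, g2, hP]
  have hRG := mul_eq_one_comm.mp hGR
  refine ⟨?_, ?_, (inv_eq_right_inv hGR).symm, ?_⟩
  · rw [hZ, hOm, transpose_sub, transpose_smul, ← transpose_map, ← transpose_map]
    simp only [Matrix.sub_mul, Matrix.mul_sub, Matrix.smul_mul, Matrix.mul_smul, hm, f1, f2, f3, f4,
      hone, hneg, hzero]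
    simp
  · rw [hZ, hOm, conjTranspose_sub, conjTranspose_smul, hct, hct]
    simp only [Matrix.sub_mul, Matrix.mul_sub, Matrix.smul_mul, Matrix.mul_smul, hm, f1, f2, f3, f4,
      hone, hneg, hzero]
    simp [two_mul, add_smul]
  · rw [hsymm] at hsymp
    have h : reMat (Z * Zᴴ) * Omr n = Omr n * G := by
      conv_lhs => rw [← hsymp]
      rw [← Matrix.mul_assoc, ← Matrix.mul_assoc, hRG, Matrix.one_mul]
    rw [Matrix.mul_assoc, h, ← Matrix.mul_assoc, hOt, Matrix.neg_mul, hOO]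
    simp
end
end

section
/- Let n ≥ 1 and let Z₀, Z₁ ∈ ℂ^{2n×n} both satisfy ZᵀΩZ = 0 and Z*ΩZ = 2i·Iₙ, and suppose range Z₀ = range Z₁ as subspaces of ℂ^{2n}. Then there exists a unitary matrix C ∈ ℂ^{n×n} (C*C = Iₙ) such that Z₁ = Z₀ C. -/
open Matrix

noncomputable section

theorem stmt6 (n : ℕ) (hn : 1 ≤ n)
    (Z₀ Z₁ : Matrix (Fin n ⊕ Fin n) (Fin n) ℂ)
    (h₀iso : Z₀ᵀ * Omc n * Z₀ = 0)
    (h₀norm : Z₀ᴴ * Omc n * Z₀ = (2 * Complex.I) • (1 : Matrix (Fin n) (Fin n) ℂ))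
    (h₁iso : Z₁ᵀ * Omc n * Z₁ = 0)
    (h₁norm : Z₁ᴴ * Omc n * Z₁ = (2 * Complex.I) • (1 : Matrix (Fin n) (Fin n) ℂ))
    (hrange : Set.range Z₀.mulVec = Set.range Z₁.mulVec) :
    ∃ C : Matrix (Fin n) (Fin n) ℂ, Cᴴ * C = 1 ∧ Z₁ = Z₀ * C := by
  have hcol : ∀ j : Fin n, ∃ c : Fin n → ℂ, Z₀.mulVec c = Z₁.mulVec (Pi.single j 1) := by
    intro j
    have h : Z₁.mulVec (Pi.single j 1) ∈ Set.range Z₀.mulVec := by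
      rw [hrange]
      exact ⟨_, rfl⟩
    exact h
  choose c hc using hcol
  have hZ : Z₁ = Z₀ * (Matrix.of fun i j => c j i) := by
    ext i j
    have h := congrFun (hc j) i
    rw [Matrix.mulVec_single_one] at h
    simpa [Matrix.mul_apply, Matrix.mulVec, dotProduct] using h.symm
  refine ⟨Matrix.of fun i j => c j i, ?_, hZ⟩
  generalize (Matrix.of fun i j => c j i : Matrix (Fin n) (Fin n) ℂ) = C at hZ
  have h2 : (2 * Complex.I) • (Cᴴ * C) = (2 * Complex.I) • (1 : Matrix (Fin n) (Fin n) ℂ) := by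
    rw [← h₁norm, hZ, Matrix.conjTranspose_mul]
    have : Cᴴ * Z₀ᴴ * Omc n * (Z₀ * C) = Cᴴ * (Z₀ᴴ * Omc n * Z₀) * C := by
      simp only [Matrix.mul_assoc]
    rw [this, h₀norm]
    simp
  exact smul_right_injective _ (by simp : (2 * Complex.I) ≠ 0) h2
end
end

section
/- Let n ≥ 1, ε > 0 and let B ∈ ℂ^{n×n} be symmetric (B = Bᵀ). A smooth function φ : ℝⁿ → ℂ satisfies A((Bq, q))φ = 0 for every q ∈ ℂⁿ if and only if there exists a constant c ∈ ℂ such that φ(x) = c·exp((i/(2ε))·x·Bx) for all x ∈ ℝⁿ. -/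
open Matrix

noncomputable section

/-- The lowering operator `A(l)` with parameter `l = (l_p, l_q) ∈ ℂⁿ × ℂⁿ`, acting on
functions `f : ℝⁿ → ℂ` by
`(A(l)f)(x) = (i/√(2ε)) ( l_q·(−iε ∇f(x)) − (l_p·x) f(x) )`. -/
def lowerOp (n : ℕ) (ε : ℝ) (l : (Fin n → ℂ) × (Fin n → ℂ))
    (f : (Fin n → ℝ) → ℂ) : (Fin n → ℝ) → ℂ := fun x =>
  (Complex.I / (Real.sqrt (2 * ε) : ℂ)) *
    ((∑ j, l.2 j * (-(Complex.I * (ε : ℂ)) * fderiv ℝ f x (Pi.single j 1))) -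
      (∑ j, l.1 j * (x j : ℂ)) * f x)

lemma aux_Q {n : ℕ} (B : Matrix (Fin n) (Fin n) ℂ) (hB : B = Bᵀ) (x : Fin n → ℝ) :
    ∃ L : (Fin n → ℝ) →L[ℝ] ℂ, HasFDerivAt (fun x : Fin n → ℝ =>
      ((fun j => (x j : ℂ)) ⬝ᵥ (B *ᵥ fun j => (x j : ℂ)))) L x ∧
      ∀ j, L (Pi.single j 1) = 2 * ∑ k, B k j * (x k : ℂ) := by
  have hc : ∀ j, HasFDerivAt (fun x : Fin n → ℝ => (x j : ℂ))
      (Complex.ofRealCLM ∘L (ContinuousLinearMap.proj (R := ℝ) (φ := fun _ : Fin n => ℝ) j)) x :=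
    fun j => (Complex.ofRealCLM ∘L
      (ContinuousLinearMap.proj (R := ℝ) (φ := fun _ : Fin n => ℝ) j)).hasFDerivAt
  have h := HasFDerivAt.fun_sum (u := Finset.univ) (fun j _ => (hc j).fun_mul
    (HasFDerivAt.fun_sum (u := Finset.univ) (fun k _ => (hc k).const_mul (B j k))))
  refine ⟨_, h, fun j => ?_⟩
  have hs : ∀ k, B j k = B k j := fun k => congrFun (congrFun hB j) k
  simp [Pi.single_apply, Finset.sum_add_distrib, apply_ite, hs, two_mul, mul_comm]

lemma aux_E {n : ℕ} (B : Matrix (Fin n) (Fin n) ℂ) (hB : B = Bᵀ) (a : ℂ) (x : Fin n → ℝ) :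
    ∃ L : (Fin n → ℝ) →L[ℝ] ℂ, HasFDerivAt (fun x : Fin n → ℝ =>
      Complex.exp (a * ((fun j => (x j : ℂ)) ⬝ᵥ (B *ᵥ fun j => (x j : ℂ))))) L x ∧
      ∀ j, L (Pi.single j 1) = 2 * a * (∑ k, B k j * (x k : ℂ)) *
        Complex.exp (a * ((fun j => (x j : ℂ)) ⬝ᵥ (B *ᵥ fun j => (x j : ℂ)))) := by
  obtain ⟨L, hL, h⟩ := aux_Q B hB x
  refine ⟨_, (hL.const_mul a).cexp, fun j => ?_⟩
  simp only [_root_.smul_apply, h, smul_eq_mul]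
  ring

lemma aux_op {n : ℕ} {ε : ℝ} (hε : 0 < ε) (B : Matrix (Fin n) (Fin n) ℂ)
    (φ : (Fin n → ℝ) → ℂ) (x : Fin n → ℝ) :
    (∀ q : Fin n → ℂ, lowerOp n ε (B *ᵥ q, q) φ x = 0) ↔
      ∀ j, fderiv ℝ φ x (Pi.single j 1) =
        (Complex.I / ε) * (∑ k, B k j * (x k : ℂ)) * φ x := by
  have h0 : (ε : ℂ) ≠ 0 := by exact_mod_cast hε.ne'
  have h1 : Complex.I / (Real.sqrt (2 * ε) : ℂ) ≠ 0 := by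
    refine div_ne_zero Complex.I_ne_zero ?_
    exact_mod_cast (Real.sqrt_pos.2 (by positivity)).ne'
  constructor
  · intro h j
    have := h (Pi.single j 1)
    simp only [lowerOp, mul_eq_zero, h1, false_or] at this
    simp [Pi.single_apply] at this
    have e : fderiv ℝ φ x (Pi.single j 1) = (Complex.I / ε) *
      (-(Complex.I * ε * fderiv ℝ φ x (Pi.single j 1))) := by
      field_simp
      simp
    linear_combination e + (Complex.I / ε) * this
  · intro h q
    simp only [lowerOp, mul_eq_zero, h1, false_or, h]
    rw [sub_eq_zero]
    have e : ∀ j, q j * (-(Complex.I * (ε : ℂ)) * (Complex.I / ε * (∑ k, B k j * (x k : ℂ)) * φ x))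
        = ∑ k, B k j * q j * x k * φ x := by
      intro j
      have : -(Complex.I * (ε : ℂ)) * (Complex.I / ε) = 1 := by
        field_simp
        simp
      have e2 : ∑ k, B k j * q j * x k * φ x = q j * (∑ k, B k j * (x k : ℂ)) * φ x := by
        rw [Finset.mul_sum, Finset.sum_mul]
        exact Finset.sum_congr rfl fun k _ => by ring
      rw [e2]
      linear_combination (q j * (∑ k, B k j * (x k : ℂ)) * φ x) * this
    simp only [e]
    rw [Finset.sum_comm, Finset.sum_mul]
    refine Finset.sum_congr rfl fun k _ => ?_
    simp only [mulVec, dotProduct, Finset.sum_mul]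

theorem stmt8 (n : ℕ) (hn : 1 ≤ n) (ε : ℝ) (hε : 0 < ε)
    (B : Matrix (Fin n) (Fin n) ℂ) (hB : B = Bᵀ)
    (φ : (Fin n → ℝ) → ℂ) (hφ : ContDiff ℝ (⊤ : ℕ∞) φ) :
    (∀ q : Fin n → ℂ, ∀ x, lowerOp n ε (B *ᵥ q, q) φ x = 0) ↔
      ∃ c : ℂ, ∀ x : Fin n → ℝ,
        φ x = c * Complex.exp ((Complex.I / (2 * ε)) *
          ((fun j => (x j : ℂ)) ⬝ᵥ (B *ᵥ fun j => (x j : ℂ)))) := by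
  constructor
  · intro h
    have h' := fun x => (aux_op hε B φ x).1 (fun q => h q x)
    set a : ℂ := Complex.I / (2 * ε) with ha
    have hd : ∀ x, ∃ L : (Fin n → ℝ) →L[ℝ] ℂ, HasFDerivAt (fun x : Fin n → ℝ => φ x *
      Complex.exp (-a * ((fun j => (x j : ℂ)) ⬝ᵥ (B *ᵥ fun j => (x j : ℂ))))) L x ∧ L = 0 := by
      intro x
      obtain ⟨L, hL, hj⟩ := aux_E B hB (-a) x
      refine ⟨_, ((hφ.differentiable (by simp)) x).hasFDerivAt.mul hL, ?_⟩
      apply ContinuousLinearMap.coe_injective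
      refine (Pi.basisFun ℝ (Fin n)).ext fun j => ?_
      simp [h', hj]
      rw [ha]
      ring
    have hc := is_const_of_fderiv_eq_zero (𝕜 := ℝ)
      (fun x => (hd x).choose_spec.1.differentiableAt)
      (fun x => (hd x).choose_spec.1.fderiv.trans (hd x).choose_spec.2)
    refine ⟨φ 0 * Complex.exp (-a * ((fun j => ((0 : Fin n → ℝ) j : ℂ)) ⬝ᵥ
      (B *ᵥ fun j => ((0 : Fin n → ℝ) j : ℂ)))), fun x => ?_⟩
    rw [← hc x 0, mul_assoc, ← Complex.exp_add]
    simp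
  · rintro ⟨c, hc⟩ q x
    refine (aux_op hε B φ x).2 (fun j => ?_) q
    obtain ⟨L, hL, hj⟩ := aux_E B hB (Complex.I / (2 * ε)) x
    have hf : HasFDerivAt φ (c • L) x := by
      rw [funext hc]
      exact hL.const_mul c
    rw [hf.fderiv, hc x, _root_.smul_apply, hj, smul_eq_mul]
    ring
end
end

section
/- Let n ≥ 1, ε > 0 and let B ∈ ℂ^{n×n} be symmetric. The Gaussian function g : ℝⁿ → ℂ, g(x) = exp((i/(2ε))·x·Bx), is square-integrable on ℝⁿ (i.e. ∫_{ℝⁿ} |g(x)|² dx < ∞) if and only if Im B is positive definite. -/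
open Matrix MeasureTheory

noncomputable section

def qf {n : ℕ} (A : Matrix (Fin n) (Fin n) ℝ) (x : Fin n → ℝ) : ℝ := x ⬝ᵥ (A *ᵥ x)

lemma qf_cont {n : ℕ} (A : Matrix (Fin n) (Fin n) ℝ) : Continuous (qf A) := by
  unfold qf
  simp only [dotProduct, Matrix.mulVec]
  fun_prop

lemma qf_smul {n : ℕ} (A : Matrix (Fin n) (Fin n) ℝ) (t : ℝ) (x : Fin n → ℝ) :
    qf A (t • x) = t ^ 2 * qf A x := by
  simp only [qf, Matrix.mulVec_smul, dotProduct_smul, smul_dotProduct, smul_eq_mul]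
  ring

lemma qf_par {n : ℕ} (A : Matrix (Fin n) (Fin n) ℝ) (x y : Fin n → ℝ) :
    qf A (x + y) + qf A (x - y) = 2 * qf A x + 2 * qf A y := by
  simp only [qf, Matrix.mulVec_add, Matrix.mulVec_sub, dotProduct_add, add_dotProduct,
    dotProduct_sub, sub_dotProduct]
  ring

lemma norm_eq {n : ℕ} (ε : ℝ) (hε : 0 < ε) (B : Matrix (Fin n) (Fin n) ℂ) (x : Fin n → ℝ) :
    ‖Complex.exp ((Complex.I / (2 * ε)) *
          ((fun j => (x j : ℂ)) ⬝ᵥ (B *ᵥ fun j => (x j : ℂ))))‖ ^ 2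
      = Real.exp (-(1 / ε) * qf (imMat B) x) := by
  have him : ((fun j => (x j : ℂ)) ⬝ᵥ (B *ᵥ fun j => (x j : ℂ))).im = qf (imMat B) x := by
    simp [qf, imMat, dotProduct, Matrix.mulVec, Complex.im_sum]
  generalize ((fun j => (x j : ℂ)) ⬝ᵥ (B *ᵥ fun j => (x j : ℂ))) = z at him
  have hz : (Complex.I / (2 * ε)) * z = ((1 / (2 * ε) : ℝ) : ℂ) * (Complex.I * z) := by
    push_cast
    ring
  rw [Complex.norm_exp, ← Real.exp_nat_mul, ← him, hz, Complex.re_ofReal_mul]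
  congr 1
  simp
  field_simp

lemma integ_of_pos {n : ℕ} (hn : 1 ≤ n) (A : Matrix (Fin n) (Fin n) ℝ) (c : ℝ) (hc : 0 < c)
    (h : ∀ x, x ≠ 0 → 0 < qf A x) : Integrable (fun x => Real.exp (-c * qf A x)) := by
  have : Nonempty (Fin n) := ⟨⟨0, hn⟩⟩
  obtain ⟨v, hv, hmin⟩ := (isCompact_sphere (0 : Fin n → ℝ) 1).exists_isMinOn
    (NormedSpace.sphere_nonempty.2 zero_le_one) (qf_cont A).continuousOn
  have hv0 : v ≠ 0 := by
    rintro rfl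
    simp at hv
  have hd := h v hv0
  set d := qf A v
  have hlow : ∀ x, d * ‖x‖ ^ 2 ≤ qf A x := by
    intro x
    by_cases hx : x = 0
    · subst hx
      simp [qf]
    have hx' : ‖x‖ ≠ 0 := norm_ne_zero_iff.2 hx
    have h1 : d ≤ qf A (‖x‖⁻¹ • x) := hmin (by simp [norm_smul, hx'])
    rw [qf_smul] at h1
    have h2 := mul_le_mul_of_nonneg_left h1 (sq_nonneg ‖x‖)
    have h3 : ‖x‖ ^ 2 * (‖x‖⁻¹ ^ 2 * qf A x) = qf A x := by field_simp
    linarith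
  have hnpos : (0 : ℝ) < n := by exact_mod_cast hn
  have hsum : ∀ x : Fin n → ℝ, ∑ i, x i ^ 2 ≤ n * ‖x‖ ^ 2 := by
    intro x
    calc ∑ i, x i ^ 2 ≤ ∑ i : Fin n, ‖x‖ ^ 2 := by
          apply Finset.sum_le_sum
          intro i _
          have := norm_le_pi_norm x i
          rw [← sq_abs]
          exact pow_le_pow_left₀ (abs_nonneg _) this 2
      _ = _ := by simp
  have hb : 0 < c * d / n := by positivity
  have hI : Integrable (fun x : Fin n → ℝ => ∏ i, Real.exp (-(c * d / n) * x i ^ 2)) :=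
    Integrable.fintype_prod (f := fun (_ : Fin n) (y : ℝ) => Real.exp (-(c * d / n) * y ^ 2))
      (fun _ => integrable_exp_neg_mul_sq hb)
  refine hI.mono' ?_ ?_
  · have := qf_cont A
    exact (by fun_prop : Continuous fun x => Real.exp (-c * qf A x)).aestronglyMeasurable
  · refine Filter.Eventually.of_forall fun x => ?_
    rw [Real.norm_of_nonneg (Real.exp_pos _).le, ← Real.exp_sum, Real.exp_le_exp, ← Finset.mul_sum]
    have h1 := hlow x
    have h2 : (c * d / n) * ∑ i, x i ^ 2 ≤ c * d * ‖x‖ ^ 2 := by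
      calc _ ≤ (c * d / n) * (n * ‖x‖ ^ 2) := mul_le_mul_of_nonneg_left (hsum x) hb.le
        _ = _ := by field_simp
    nlinarith

lemma pos_of_integ {n : ℕ} (A : Matrix (Fin n) (Fin n) ℝ) (c : ℝ) (hc : 0 < c)
    (hI : Integrable (fun x => Real.exp (-c * qf A x))) (v : Fin n → ℝ) (hv : v ≠ 0) :
    0 < qf A v := by
  by_contra! hneg
  set f : (Fin n → ℝ) → ℝ := fun x => Real.exp (-c * qf A x) with hf
  have hf0 : ∀ x, 0 < f x := fun x => Real.exp_pos _
  have hvn : 0 < ‖v‖ := norm_pos_iff.2 hv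
  set K := Metric.closedBall (0 : Fin n → ℝ) 1
  let S : ℕ → Set (Fin n → ℝ) := fun m => {x | (m : ℝ) ≤ ‖x‖}
  have hSm : ∀ m, MeasurableSet (S m) := fun m =>
    (isClosed_le continuous_const continuous_norm).measurableSet
  have hKm : MeasurableSet K := Metric.isClosed_closedBall.measurableSet
  have hlim : Filter.Tendsto (fun m => ∫ x in S m, f x) Filter.atTop (nhds 0) := by
    have := tendsto_setIntegral_of_antitone (μ := volume) (f := f) hSm
      (fun a b hab x (hx : (b : ℝ) ≤ ‖x‖) => le_trans (Nat.cast_le.2 hab) hx)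
      ⟨0, hI.integrableOn⟩
    have he : (⋂ m, S m) = ∅ := by
      ext x
      simp only [Set.mem_iInter, Set.mem_empty_iff_false, iff_false, not_forall]
      obtain ⟨m, hm⟩ := exists_nat_gt ‖x‖
      exact ⟨m, not_le.2 hm⟩
    simpa [he] using this
  have hKpos : 0 < ∫ x in K, f x := by
    rw [setIntegral_pos_iff_support_of_nonneg_ae (Filter.Eventually.of_forall fun x => (hf0 x).le)
      hI.integrableOn]
    have : Function.support f = Set.univ := by
      ext x
      simp [(hf0 x).ne']
    rw [this, Set.univ_inter]
    exact Metric.measure_closedBall_pos _ _ one_pos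
  have hpt : ∀ (x : Fin n → ℝ) (t : ℝ), 2 * f x ≤ f (x + t • v) + f (x + -(t • v)) := by
    intro x t
    have h1 := qf_par A x (t • v)
    rw [qf_smul, sub_eq_add_neg] at h1
    have h2 : t ^ 2 * qf A v ≤ 0 := mul_nonpos_of_nonneg_of_nonpos (sq_nonneg _) hneg
    have h3 : f x ^ 2 ≤ f (x + t • v) * f (x + -(t • v)) := by
      simp only [hf]
      rw [← Real.exp_add, ← Real.exp_nat_mul, Real.exp_le_exp]
      push_cast
      nlinarith
    have ha := hf0 (x + t • v)
    have hb := hf0 (x + -(t • v))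
    nlinarith [sq_nonneg (f (x + t • v) - f (x + -(t • v))), hf0 x]
  have hshift : ∀ (m : ℕ) (w : Fin n → ℝ), (m : ℝ) + 1 ≤ ‖w‖ →
      ∫ x in K, f (x + w) ≤ ∫ x in S m, f x := by
    intro m w hw
    rw [← integral_indicator (hSm m), ← integral_indicator hKm,
      ← integral_add_right_eq_self ((S m).indicator f) w]
    apply integral_mono
    · exact (hI.comp_add_right w).indicator hKm
    · exact (hI.indicator (hSm m)).comp_add_right w
    · intro x
      by_cases hx : x ∈ K
      · have hx1 : ‖x‖ ≤ 1 := by simpa [K] using hx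
        have : x + w ∈ S m := by
          change (m : ℝ) ≤ ‖x + w‖
          have := norm_sub_le (x + w) x
          rw [add_sub_cancel_left] at this
          linarith
        simp [hx, this]
      · simp only [Set.indicator_of_notMem hx]
        exact Set.indicator_nonneg (fun y _ => (hf0 y).le) _
  have hle : ∀ m : ℕ, ∫ x in K, f x ≤ ∫ x in S m, f x := by
    intro m
    set t : ℝ := (m + 1) / ‖v‖
    have ht : ‖t • v‖ = m + 1 := by
      rw [norm_smul, Real.norm_of_nonneg (by positivity)]
      simp only [t]
      field_simp
    have h1 := hshift m (t • v) ht.ge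
    have h2 := hshift m (-(t • v)) (by rw [norm_neg]; exact ht.ge)
    have h3 : ∫ x in K, 2 * f x ≤ ∫ x in K, (f (x + t • v) + f (x + -(t • v))) := by
      apply integral_mono
      · exact (hI.const_mul 2).integrableOn
      · exact ((hI.comp_add_right _).add (hI.comp_add_right _)).integrableOn
      · exact fun x => hpt x t
    rw [integral_const_mul, integral_add (hI.comp_add_right _).integrableOn
      (hI.comp_add_right _).integrableOn] at h3
    linarith
  exact absurd (ge_of_tendsto' hlim hle) (not_le.2 hKpos)

theorem stmt9 (n : ℕ) (hn : 1 ≤ n) (ε : ℝ) (hε : 0 < ε)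
    (B : Matrix (Fin n) (Fin n) ℂ) (hB : B = Bᵀ) :
    Integrable (fun x : Fin n → ℝ =>
        ‖Complex.exp ((Complex.I / (2 * ε)) *
          ((fun j => (x j : ℂ)) ⬝ᵥ (B *ᵥ fun j => (x j : ℂ))))‖ ^ 2)
      volume ↔ (imMat B).PosDef := by
  have hH : (imMat B).IsHermitian := by
    ext i j
    have := congrFun (congrFun hB i) j
    simp only [Matrix.transpose_apply] at this
    simp [imMat, this]
  simp only [norm_eq ε hε B]
  have hc : 0 < 1 / ε := by positivity
  constructor
  · intro h
    refine Matrix.PosDef.of_dotProduct_mulVec_pos hH fun x hx => ?_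
    simpa [qf] using pos_of_integ _ _ hc h x hx
  · intro h
    refine integ_of_pos hn _ _ hc fun x hx => ?_
    simpa [qf] using h.dotProduct_mulVec_pos hx
end
end

section
/- Let n ≥ 1 and let Z ∈ ℂ^{2n×n} satisfy ZᵀΩZ = 0, and assume the Hermitian matrix (1/(2i))·Z*ΩZ is positive definite. Write Z = (P; Q) with P, Q ∈ ℂ^{n×n} the top and bottom n×n blocks. Then both P and Q are invertible. -/
open Matrix
open scoped ComplexOrder

noncomputable section

/-- Top `n × n` block of a `2n × n` matrix. -/
def topBlock (n : ℕ) (Z : Matrix (Fin n ⊕ Fin n) (Fin n) ℂ) : Matrix (Fin n) (Fin n) ℂ :=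
  Z.submatrix Sum.inl id

/-- Bottom `n × n` block of a `2n × n` matrix. -/
def botBlock (n : ℕ) (Z : Matrix (Fin n ⊕ Fin n) (Fin n) ℂ) : Matrix (Fin n) (Fin n) ℂ :=
  Z.submatrix Sum.inr id

theorem aux_form (n : ℕ) (Z : Matrix (Fin n ⊕ Fin n) (Fin n) ℂ) :
    Zᴴ * Omc n * Z = (botBlock n Z)ᴴ * topBlock n Z - (topBlock n Z)ᴴ * botBlock n Z := by
  have h : Z = Matrix.fromRows (topBlock n Z) (botBlock n Z) := by
    ext i j
    rcases i with i | i <;> rfl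
  conv_lhs => rw [h]
  rw [Matrix.conjTranspose_fromRows_eq_fromCols_conjTranspose, Omc,
    Matrix.fromCols_mul_fromBlocks, Matrix.fromCols_mul_fromRows]
  simp [sub_eq_add_neg]

theorem aux_unit (n : ℕ) (A B M : Matrix (Fin n) (Fin n) ℂ) (hM : M.PosDef) (c : ℂ)
    (h : M = c • (Bᴴ * A - Aᴴ * B)) : IsUnit A := by
  rw [← Matrix.mulVec_injective_iff_isUnit]
  refine (injective_iff_map_eq_zero A.mulVecLin).2 ?_
  intro v hv
  rw [Matrix.mulVecLin_apply] at hv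
  by_contra hne
  have hp := hM.dotProduct_mulVec_pos hne
  have h0 : star v ⬝ᵥ (M *ᵥ v) = 0 := by
    have h1 : star v ᵥ* Aᴴ = 0 := by rw [← Matrix.star_mulVec, hv, star_zero]
    rw [h, Matrix.smul_mulVec, Matrix.sub_mulVec, ← Matrix.mulVec_mulVec, ← Matrix.mulVec_mulVec,
      hv, dotProduct_smul, dotProduct_sub, Matrix.dotProduct_mulVec _ Aᴴ, h1]
    simp
  exact absurd hp (by rw [h0]; exact lt_irrefl _)

theorem stmt10 (n : ℕ) (hn : 1 ≤ n)
    (Z : Matrix (Fin n ⊕ Fin n) (Fin n) ℂ)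
    (hiso : Zᵀ * Omc n * Z = 0)
    (hpos : ((2 * Complex.I)⁻¹ • (Zᴴ * Omc n * Z)).PosDef) :
    IsUnit (topBlock n Z) ∧ IsUnit (botBlock n Z) := by
  rw [aux_form] at hpos
  refine ⟨aux_unit n _ (botBlock n Z) _ hpos _ rfl,
    aux_unit n _ (topBlock n Z) _ hpos (-(2 * Complex.I)⁻¹) ?_⟩
  rw [neg_smul, ← smul_neg, neg_sub]
end
end

section
/- Let n ≥ 1, let Z₀ ∈ ℂ^{2n×n} be a normalised Lagrangian frame (Z₀ᵀΩZ₀ = 0, Z₀*ΩZ₀ = 2i·Iₙ), and let S ∈ ℂ^{2n×2n} be complex symplectic (SᵀΩS = Ω). Let Z ∈ ℂ^{2n×n} be a normalised Lagrangian frame with range Z = range(S·Z₀), and assume range Z is positive, i.e. h(l, l) > 0 for every nonzero l ∈ range Z. Define C := (i/2)·Z*·Ωᵀ·S̄·Z₀ and D := (i/2)·Z*·Ωᵀ·S·Z̄₀. Then S̄·Z₀ = Z·C + Z̄·D̄, and moreover C and D are the unique matrices in ℂ^{n×n} with this property. -/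
open Matrix

noncomputable section

/-- The Hermitian form `h(z, z') = (i/2) ⬝ z̄ · (Ωᵀ z')` on `ℂ^{2n}`. -/
def hformN (n : ℕ) (z z' : Fin n ⊕ Fin n → ℂ) : ℂ :=
  (Complex.I / 2) * (star z ⬝ᵥ ((Omc n)ᵀ *ᵥ z'))

theorem stmt14 (n : ℕ) (hn : 1 ≤ n)
    (Z₀ Z : Matrix (Fin n ⊕ Fin n) (Fin n) ℂ)
    (S : Matrix (Fin n ⊕ Fin n) (Fin n ⊕ Fin n) ℂ)
    (hZ₀iso : Z₀ᵀ * Omc n * Z₀ = 0)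
    (hZ₀norm : Z₀ᴴ * Omc n * Z₀ = (2 * Complex.I) • (1 : Matrix (Fin n) (Fin n) ℂ))
    (hS : Sᵀ * Omc n * S = Omc n)
    (hZiso : Zᵀ * Omc n * Z = 0)
    (hZnorm : Zᴴ * Omc n * Z = (2 * Complex.I) • (1 : Matrix (Fin n) (Fin n) ℂ))
    (hrange : Set.range Z.mulVec = Set.range (S * Z₀).mulVec)
    (hposL : ∀ c : Fin n → ℂ, Z.mulVec c ≠ 0 →
      0 < (hformN n (Z.mulVec c) (Z.mulVec c)).re ∧
        (hformN n (Z.mulVec c) (Z.mulVec c)).im = 0) :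
    let C := (Complex.I / 2) • (Zᴴ * (Omc n)ᵀ * S.map (starRingEnd ℂ) * Z₀)
    let D := (Complex.I / 2) • (Zᴴ * (Omc n)ᵀ * S * Z₀.map (starRingEnd ℂ))
    -- decomposition S̄ Z₀ = Z C + Z̄ D̄
    (S.map (starRingEnd ℂ) * Z₀ =
      Z * C + Z.map (starRingEnd ℂ) * D.map (starRingEnd ℂ)) ∧
    -- uniqueness
    (∀ C' D' : Matrix (Fin n) (Fin n) ℂ,
      S.map (starRingEnd ℂ) * Z₀ =
        Z * C' + Z.map (starRingEnd ℂ) * D'.map (starRingEnd ℂ) →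
      C' = C ∧ D' = D) := by
  have e2 : (starRingEnd ℂ) 2 = 2 := Complex.conj_ofNat 2
  have hT : (Omc n)ᵀ = -Omc n := by
    simp [Omc, Matrix.fromBlocks_transpose, Matrix.fromBlocks_neg]
  have hB : (Omc n).map (starRingEnd ℂ) = Omc n := by
    ext i j
    rcases i with i | i <;> rcases j with j | j <;>
      simp [Omc, Matrix.one_apply, apply_ite]
  have hH : Zᴴ.map (starRingEnd ℂ) = Zᵀ := by ext i j; simp
  have hTm : Zᵀ.map (starRingEnd ℂ) = Zᴴ := by ext i j; simp
  have hdd : ∀ M : Matrix (Fin n) (Fin n) ℂ,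
      (M.map (starRingEnd ℂ)).map (starRingEnd ℂ) = M := by
    intro M; ext i j; simp
  have h3 : Zᴴ * Omc n * Z.map (starRingEnd ℂ) = 0 := by
    have := congrArg (fun M => M.map (starRingEnd ℂ)) hZiso
    simpa only [Matrix.map_mul, hB, hTm, Matrix.map_zero _ (map_zero (starRingEnd ℂ))] using this
  have h4 : Zᵀ * Omc n * Z.map (starRingEnd ℂ) =
      (-(2 * Complex.I)) • (1 : Matrix (Fin n) (Fin n) ℂ) := by
    have := congrArg (fun M => M.map (starRingEnd ℂ)) hZnorm
    simp only [Matrix.map_mul, hB, hH] at this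
    rw [this]
    ext i j
    by_cases hij : i = j <;> simp [Matrix.one_apply, hij, e2]
  have e1 : Complex.I / 2 * (2 * Complex.I) = -1 := by
    linear_combination Complex.I_mul_I
  set Zb := Z.map (starRingEnd ℂ) with hZb
  let Q1 : Matrix (Fin n) (Fin n ⊕ Fin n) ℂ := (Complex.I / 2) • (Zᴴ * (Omc n)ᵀ)
  let Q2 : Matrix (Fin n) (Fin n ⊕ Fin n) ℂ := (Complex.I / 2) • (Zᵀ * Omc n)
  have q11 : Q1 * Z = 1 := by
    simp only [Q1, hT, Matrix.mul_neg, Matrix.neg_mul, Matrix.smul_mul, hZnorm, smul_neg, smul_smul, e1]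
    simp
  have q12 : Q1 * Zb = 0 := by
    simp only [Q1, hT, Matrix.mul_neg, Matrix.neg_mul, Matrix.smul_mul, h3]
    simp
  have q21 : Q2 * Z = 0 := by
    simp only [Q2, Matrix.smul_mul, hZiso, smul_zero]
  have q22 : Q2 * Zb = 1 := by
    simp only [Q2, Matrix.smul_mul, h4, smul_smul, mul_neg, e1]
    simp
  have hQP : Matrix.fromRows Q1 Q2 * Matrix.fromCols Z Zb = 1 := by
    rw [Matrix.fromRows_mul_fromCols, q11, q12, q21, q22, Matrix.fromBlocks_one]
  have hPQ : Z * Q1 + Zb * Q2 = 1 := by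
    rw [← Matrix.fromCols_mul_fromRows]
    exact mul_eq_one_comm.mp hQP
  intro C D
  set A := S.map (starRingEnd ℂ) * Z₀ with hA
  have hC : C = Q1 * A := by
    simp only [C, Q1, hA, Matrix.smul_mul, Matrix.mul_assoc]
  have hZ0 : (Z₀.map (starRingEnd ℂ)).map (starRingEnd ℂ) = Z₀ := by ext i j; simp
  have hD : D.map (starRingEnd ℂ) = Q2 * A := by
    have : D.map (starRingEnd ℂ) = (starRingEnd ℂ (Complex.I / 2)) •
        (Zᴴ * (Omc n)ᵀ * S * Z₀.map (starRingEnd ℂ)).map (starRingEnd ℂ) := by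
      ext i j
      simp only [D, Matrix.map_apply, Matrix.smul_apply, smul_eq_mul, map_mul]
    rw [this, hT, Matrix.mul_neg, Matrix.neg_mul, Matrix.neg_mul]
    have hneg : (-(Zᴴ * Omc n * S * Z₀.map (starRingEnd ℂ))).map (starRingEnd ℂ) =
        -((Zᴴ * Omc n * S * Z₀.map (starRingEnd ℂ)).map (starRingEnd ℂ)) := by
      ext i j
      simp only [Matrix.map_apply, Matrix.neg_apply, map_neg]
    rw [hneg]
    simp only [Matrix.map_mul, hB, hH, hZ0]
    simp only [Q2, hA, Matrix.smul_mul, Matrix.mul_assoc, smul_neg, ← neg_smul]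
    congr 1
    simp [neg_div, e2]
  refine ⟨?_, ?_⟩
  · rw [hC, hD, ← Matrix.mul_assoc Z Q1 A, ← Matrix.mul_assoc Zb Q2 A, ← Matrix.add_mul, hPQ, Matrix.one_mul]
  · intro C' D' h
    constructor
    · rw [hC, h, Matrix.mul_add, ← Matrix.mul_assoc, ← Matrix.mul_assoc, q11, q12]
      simp
    · rw [← hdd D, hD, h, Matrix.mul_add, ← Matrix.mul_assoc, ← Matrix.mul_assoc, q21, q22,
        Matrix.zero_mul, Matrix.one_mul, zero_add, hdd]
end
end

section
/- Let n ≥ 1 and let H : ℝ → ℂ^{2n×2n} be continuous with H(t)ᵀ = H(t). Let S : ℝ → ℂ^{2n×2n} be differentiable with S'(t) = Ω·H(t)·S(t) and S(0) = I_{2n}, and let J : ℝ → ℝ^{2n×2n} be differentiable and satisfy J'(t) = Ω·Re H(t)·J(t) − J(t)·Ω·Re H(t) + Ω·Im H(t) + J(t)·Ω·Im H(t)·J(t). Then for every z₀ ∈ ℝ^{2n}, the curve z(t) := Re(S(t)z₀) + J(t)·Im(S(t)z₀) ∈ ℝ^{2n} is differentiable and satisfies z'(t) = Ω·Re H(t)·z(t)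 + J(t)·Ω·Im H(t)·z(t). (If J(t) = −Ω G(t) with G(t) symplectic, then J(t)Ω = G(t)⁻¹, so this is z' = Ω Re H z + G⁻¹ Im H z.) -/
open Matrix

noncomputable section

theorem aux_Om (n : ℕ) : Omc n = (Omr n).map Complex.ofReal := by
  ext i j
  rcases i with i | i <;> rcases j with j | j <;>
    simp [Omc, Omr, Matrix.one_apply] <;> split_ifs <;> simp

theorem aux_re {m : Type*} [Fintype m] (O : Matrix m m ℝ) (M : Matrix m m ℂ) (v : m → ℂ) :
    (fun i => ((O.map Complex.ofReal * M) *ᵥ v) i |>.re) =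
      (O * reMat M) *ᵥ (fun i => (v i).re) - (O * imMat M) *ᵥ (fun i => (v i).im) := by
  rw [← Matrix.mulVec_mulVec, ← Matrix.mulVec_mulVec, ← Matrix.mulVec_mulVec,
    ← Matrix.mulVec_sub]
  ext i
  simp [Matrix.mulVec, dotProduct, reMat, imMat, Finset.sum_sub_distrib]

theorem aux_im {m : Type*} [Fintype m] (O : Matrix m m ℝ) (M : Matrix m m ℂ) (v : m → ℂ) :
    (fun i => ((O.map Complex.ofReal * M) *ᵥ v) i |>.im) =
      (O * reMat M) *ᵥ (fun i => (v i).im) + (O * imMat M) *ᵥ (fun i => (v i).re) := by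
  rw [← Matrix.mulVec_mulVec, ← Matrix.mulVec_mulVec, ← Matrix.mulVec_mulVec,
    ← Matrix.mulVec_add]
  ext i
  simp [Matrix.mulVec, dotProduct, reMat, imMat, Finset.sum_add_distrib]

theorem aux_alg {m : Type*} [Fintype m] (P Q K J : Matrix m m ℝ) (L : Matrix m m ℝ)
    (x y : m → ℝ) (hK : K = J * P) (hL : L = J * Q) :
    (P *ᵥ x - Q *ᵥ y) + ((P * J - K + Q + L * J) *ᵥ y + J *ᵥ (P *ᵥ y + Q *ᵥ x)) =
      P *ᵥ (x + J *ᵥ y) + L *ᵥ (x + J *ᵥ y) := by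
  subst hK hL
  simp only [Matrix.mulVec_add, Matrix.add_mulVec, Matrix.sub_mulVec, Matrix.mulVec_mulVec]
  abel

theorem stmt16 (n : ℕ) (hn : 1 ≤ n)
    (H : ℝ → Matrix (Fin n ⊕ Fin n) (Fin n ⊕ Fin n) ℂ)
    (hHcont : ∀ i j, Continuous fun t => H t i j)
    (hHsymm : ∀ t, (H t)ᵀ = H t)
    (S : ℝ → Matrix (Fin n ⊕ Fin n) (Fin n ⊕ Fin n) ℂ)
    (hS0 : S 0 = 1)
    (hSderiv : ∀ t i j, HasDerivAt (fun s => S s i j) ((Omc n * H t * S t) i j) t)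
    (J : ℝ → Matrix (Fin n ⊕ Fin n) (Fin n ⊕ Fin n) ℝ)
    (hJderiv : ∀ t i j, HasDerivAt (fun s => J s i j)
      ((Omr n * reMat (H t) * J t - J t * Omr n * reMat (H t)
        + Omr n * imMat (H t) + J t * Omr n * imMat (H t) * J t) i j) t)
    (z₀ : Fin n ⊕ Fin n → ℝ) :
    -- z(t) = Re(S(t)z₀) + J(t)·Im(S(t)z₀)
    let z : ℝ → (Fin n ⊕ Fin n → ℝ) := fun t =>
      (fun i => (S t *ᵥ (fun k => (z₀ k : ℂ))) i |>.re) +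
        J t *ᵥ (fun i => (S t *ᵥ (fun k => (z₀ k : ℂ))) i |>.im)
    ∀ t i, HasDerivAt (fun s => z s i)
      (((Omr n * reMat (H t)) *ᵥ z t + (J t * Omr n * imMat (H t)) *ᵥ z t) i) t := by
  intro z t i
  have hv : ∀ i, HasDerivAt (fun s => (S s *ᵥ (fun k => (z₀ k : ℂ))) i)
      (((Omc n * H t) *ᵥ (S t *ᵥ (fun k => (z₀ k : ℂ)))) i) t := by
    intro i
    rw [Matrix.mulVec_mulVec]
    exact HasDerivAt.fun_sum (u := Finset.univ) fun k _ => (hSderiv t i k).mul_const (z₀ k : ℂ)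
  have hre : ∀ i, HasDerivAt (fun s => ((S s *ᵥ (fun k => (z₀ k : ℂ))) i).re)
      (((Omc n * H t) *ᵥ (S t *ᵥ (fun k => (z₀ k : ℂ)))) i).re t := fun i =>
    Complex.reCLM.hasFDerivAt.comp_hasDerivAt t (hv i)
  have him : ∀ i, HasDerivAt (fun s => ((S s *ᵥ (fun k => (z₀ k : ℂ))) i).im)
      (((Omc n * H t) *ᵥ (S t *ᵥ (fun k => (z₀ k : ℂ)))) i).im t := fun i =>
    Complex.imCLM.hasFDerivAt.comp_hasDerivAt t (hv i)
  have h := (hre i).fun_add (HasDerivAt.fun_sum (u := Finset.univ)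
    fun k _ => (hJderiv t i k).fun_mul (him k))
  refine h.congr_deriv ?_
  have ha := congrFun (aux_alg (Omr n * reMat (H t)) (Omr n * imMat (H t))
    (J t * Omr n * reMat (H t)) (J t) (J t * Omr n * imMat (H t))
    (fun i => ((S t *ᵥ (fun k => (z₀ k : ℂ))) i).re)
    (fun i => ((S t *ᵥ (fun k => (z₀ k : ℂ))) i).im)
    (Matrix.mul_assoc _ _ _) (Matrix.mul_assoc _ _ _)) i
  rw [← aux_re, ← aux_im, ← aux_Om] at ha
  refine Eq.trans ?_ ha
  rw [Finset.sum_add_distrib]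
  rfl
end
end

section
/- Let n ≥ 1, let M ∈ ℂ^{n×n} be symmetric (M = Mᵀ), let c ∈ ℂ, and let p : ℕⁿ → ℂ[x₁,…,xₙ] be a family of multivariate polynomials satisfying the recursion p₀ = c and, for every α ∈ ℕⁿ and every j ∈ {1,…,n}, p_{α+eⱼ} = xⱼ·p_α − Σ_{k=1}^{n} M_{jk}·∂p_α/∂x_k, where eⱼ is the j-th standard unit multi-index. Then for every α ∈ ℕⁿ and every k ∈ {1,…,n}: if α_k ≥ 1 then ∂p_α/∂x_k = α_k·p_{α−e_k}, and if α_k = 0 then ∂p_α/∂x_k = 0. -/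
open Matrix

noncomputable section

theorem stmt17 (n : ℕ) (hn : 1 ≤ n)
    (M : Matrix (Fin n) (Fin n) ℂ) (hM : M = Mᵀ) (c : ℂ)
    (p : (Fin n → ℕ) → MvPolynomial (Fin n) ℂ)
    (h0 : p 0 = MvPolynomial.C c)
    (hrec : ∀ (α : Fin n → ℕ) (j : Fin n),
      p (α + Pi.single j 1) =
        MvPolynomial.X j * p α -
          ∑ k, MvPolynomial.C (M j k) * MvPolynomial.pderiv k (p α)) :
    ∀ (α : Fin n → ℕ) (k : Fin n),
      (1 ≤ α k →
        MvPolynomial.pderiv k (p α) =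
          MvPolynomial.C ((α k : ℂ)) * p (α - Pi.single k 1)) ∧
      (α k = 0 → MvPolynomial.pderiv k (p α) = 0) := by
  have key : ∀ (N : ℕ) (α : Fin n → ℕ), ∑ i, α i = N → ∀ k : Fin n,
      MvPolynomial.pderiv k (p α) =
          MvPolynomial.C ((α k : ℂ)) * p (α - Pi.single k 1) := by
    intro N
    induction N with
    | zero =>
      intro α hα k
      have : α = 0 := by
        funext i
        exact (Finset.sum_eq_zero_iff.mp hα) i (Finset.mem_univ i)
      subst this
      simp [h0]
    | succ N ih =>
      intro α hα k
      obtain ⟨j, hj⟩ : ∃ j, 1 ≤ α j := by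
        by_contra! hcon
        have : ∑ i, α i = 0 := Finset.sum_eq_zero (fun i _ => by have := hcon i; omega)
        omega
      obtain ⟨β, rfl⟩ : ∃ β : Fin n → ℕ, α = β + Pi.single j 1 := by
        refine ⟨α - Pi.single j 1, ?_⟩
        funext i
        by_cases hi : i = j
        · subst hi; simp; omega
        · simp [hi]
      have hβ : ∑ i, β i = N := by
        simp [Finset.sum_add_distrib] at hα
        exact hα
      have hk := ih β hβ k
      have hcomm : ∀ m, MvPolynomial.pderiv k (MvPolynomial.pderiv m (p β)) =
          MvPolynomial.C ((β k : ℂ)) * MvPolynomial.pderiv m (p (β - Pi.single k 1)) := by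
        intro m
        have h1 : MvPolynomial.pderiv k (MvPolynomial.pderiv m (p β)) =
            MvPolynomial.pderiv m (MvPolynomial.pderiv k (p β)) := by
          have hz : ⁅(MvPolynomial.pderiv k : Derivation ℂ (MvPolynomial (Fin n) ℂ) (MvPolynomial (Fin n) ℂ)), (MvPolynomial.pderiv m : Derivation ℂ (MvPolynomial (Fin n) ℂ) (MvPolynomial (Fin n) ℂ))⁆ =
              (0 : Derivation ℂ (MvPolynomial (Fin n) ℂ) (MvPolynomial (Fin n) ℂ)) := by
            apply MvPolynomial.derivation_ext
            intro i
            rw [Derivation.commutator_apply]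
            simp [MvPolynomial.pderiv_X, Pi.single_apply]
            split_ifs <;> simp
          have := congrArg (fun D : Derivation ℂ (MvPolynomial (Fin n) ℂ) (MvPolynomial (Fin n) ℂ) => D (p β)) hz
          simp only [Derivation.commutator_apply, Derivation.zero_apply] at this
          exact sub_eq_zero.mp this
        rw [h1, hk, MvPolynomial.pderiv_C_mul]
      have hmain : MvPolynomial.pderiv k (p (β + Pi.single j 1)) =
          MvPolynomial.pderiv k (MvPolynomial.X j) * p β +
          MvPolynomial.C ((β k : ℂ)) * p (β - Pi.single k 1 + Pi.single j 1) := by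
        rw [hrec, hrec, map_sub, map_sum, MvPolynomial.pderiv_mul, hk]
        simp only [MvPolynomial.pderiv_C_mul, hcomm, mul_sub, Finset.mul_sum]
        have : ∀ m, MvPolynomial.C (M j m) * (MvPolynomial.C ((β k : ℂ)) *
            MvPolynomial.pderiv m (p (β - Pi.single k 1))) =
            MvPolynomial.C ((β k : ℂ)) * (MvPolynomial.C (M j m) *
            MvPolynomial.pderiv m (p (β - Pi.single k 1))) := fun m => by ring
        simp only [this]
        ring
      rw [hmain]
      by_cases hjk : j = k
      · subst hjk
        have e1 : β + Pi.single j 1 - Pi.single j 1 = β := by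
          funext i; simp
        rw [e1]
        by_cases hb : β j = 0
        · simp [hb]
        · have e2 : β - Pi.single j 1 + Pi.single j 1 = β := by
            funext i
            by_cases hi : i = j
            · subst hi; simp; omega
            · simp [hi]
          rw [e2]
          simp
          ring
      · have e3 : β + Pi.single j 1 - Pi.single k 1 = β - Pi.single k 1 + Pi.single j 1 := by
          funext i
          by_cases hi : i = j
          · subst hi; simp [hjk]
          · simp [hi]
        rw [e3, MvPolynomial.pderiv_X_of_ne hjk]
        simp [Ne.symm hjk]
  intro α k
  refine ⟨fun _ => key _ α rfl k, fun h => ?_⟩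
  rw [key _ α rfl k, h]
  simp
end
end

section
/- Let ω₀, δ > 0, ω := √(ω₀² + δ²), H = [[ω₀, −iδ],[−iδ, ω₀]] ∈ ℂ^{2×2}, and S(t) := cos(tω)·I₂ + (sin(tω)/ω)·ΩH (which equals exp(t·ΩH)). Let l₀ := (1, −i) ∈ ℂ², which satisfies h(l₀, l₀) = 1. Then for all t ∈ ℝ: h(S(t)l₀, S(t)l₀) = 1 − (δ²/ω²)·(1 − cos(2tω)). Consequently: (i) if ω₀ > δ, then h(S(t)l₀, S(t)l₀) > 0 for all t ∈ ℝ, so the Lagrangian line spanned by S(t)l₀ is positive for all times; (ii) if δ ≥ ω₀, then, with T := arccos(−ω₀²/δ²)/(2ω), one has h(S(t)l₀, S(t)l₀) > 0 for 0 ≤ t < T and h(S(T)l₀, S(T)l₀) = 0. -/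
open Matrix

noncomputable section

/-- The Hermitian form `h(z, z') = (i/2) ⬝ z̄ · (Ωᵀ z')` on `ℂ²`,
with `Ω = [[0, -1], [1, 0]]`. -/
def hform2 (z z' : Fin 2 → ℂ) : ℂ :=
  (Complex.I / 2) *
    (star z ⬝ᵥ ((!![0, -1; 1, 0] : Matrix (Fin 2) (Fin 2) ℂ)ᵀ *ᵥ z'))

theorem stmt19 (ω₀ δ : ℝ) (hω₀ : 0 < ω₀) (hδ : 0 < δ) :
    let ω := Real.sqrt (ω₀ ^ 2 + δ ^ 2)
    let H : Matrix (Fin 2) (Fin 2) ℂ :=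
      !![(ω₀ : ℂ), -(Complex.I * (δ : ℂ)); -(Complex.I * (δ : ℂ)), (ω₀ : ℂ)]
    let Om2 : Matrix (Fin 2) (Fin 2) ℂ := !![0, -1; 1, 0]
    let S : ℝ → Matrix (Fin 2) (Fin 2) ℂ := fun t =>
      ((Real.cos (t * ω) : ℝ) : ℂ) • (1 : Matrix (Fin 2) (Fin 2) ℂ) +
        ((Real.sin (t * ω) / ω : ℝ) : ℂ) • (Om2 * H)
    let l₀ : Fin 2 → ℂ := ![1, -Complex.I]
    -- h(l₀, l₀) = 1
    (hform2 l₀ l₀ = 1) ∧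
    -- the explicit formula for h(S(t)l₀, S(t)l₀)
    (∀ t : ℝ, hform2 (S t *ᵥ l₀) (S t *ᵥ l₀) =
      ((1 - δ ^ 2 / ω ^ 2 * (1 - Real.cos (2 * t * ω)) : ℝ) : ℂ)) ∧
    -- (i) if ω₀ > δ the Lagrangian line stays positive for all times
    (ω₀ > δ → ∀ t : ℝ, 0 < (hform2 (S t *ᵥ l₀) (S t *ᵥ l₀)).re) ∧
    -- (ii) if δ ≥ ω₀, positivity holds on [0, T) and degenerates at T
    (δ ≥ ω₀ →
      let T := Real.arccos (-(ω₀ ^ 2 / δ ^ 2)) / (2 * ω)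
      (∀ t : ℝ, 0 ≤ t → t < T → 0 < (hform2 (S t *ᵥ l₀) (S t *ᵥ l₀)).re) ∧
        hform2 (S T *ᵥ l₀) (S T *ᵥ l₀) = 0) := by
  intro ω H Om2 S l₀
  have hpos : 0 < ω₀ ^ 2 + δ ^ 2 := by positivity
  have hω : 0 < ω := Real.sqrt_pos.mpr hpos
  have hω2 : ω ^ 2 = ω₀ ^ 2 + δ ^ 2 := Real.sq_sqrt hpos.le
  have key : ∀ t : ℝ, hform2 (S t *ᵥ l₀) (S t *ᵥ l₀) =
      ((1 - δ ^ 2 / ω ^ 2 * (1 - Real.cos (2 * t * ω)) : ℝ) : ℂ) := by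
    intro t
    have h1 : 1 - δ ^ 2 / ω ^ 2 * (1 - Real.cos (2 * t * ω)) =
        Real.cos (t * ω) ^ 2 + (Real.sin (t * ω) / ω) ^ 2 * (ω₀ ^ 2 - δ ^ 2) := by
      have h2 : ω₀ ^ 2 = ω ^ 2 - δ ^ 2 := by linarith
      rw [mul_assoc, Real.cos_two_mul, h2]
      have := Real.sin_sq_add_cos_sq (t * ω)
      have h3 : Real.sin (t * ω) ^ 2 = 1 - Real.cos (t * ω) ^ 2 := by linarith
      rw [div_pow, h3]
      field_simp
      ring
    rw [h1]
    simp only [S, l₀, H, Om2]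
    generalize Real.cos (t * ω) = c
    generalize Real.sin (t * ω) / ω = s
    apply Complex.ext <;>
    · simp [hform2, Matrix.mulVec, dotProduct, Fin.sum_univ_two, Matrix.mul_apply, pow_two]
      try ring
  have key2 : ∀ t : ℝ, (hform2 (S t *ᵥ l₀) (S t *ᵥ l₀)).re =
      (ω₀ ^ 2 + δ ^ 2 * Real.cos (2 * t * ω)) / ω ^ 2 := by
    intro t
    rw [key t, Complex.ofReal_re]
    field_simp
    rw [hω2]
    ring
  refine ⟨?_, key, ?_, ?_⟩
  · apply Complex.ext <;>
    · simp [l₀, hform2, Matrix.mulVec, dotProduct, Fin.sum_univ_two]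
      try norm_num
  · intro h t
    rw [key2]
    apply div_pos _ (by positivity)
    have := Real.neg_one_le_cos (2 * t * ω)
    nlinarith [sq_nonneg δ]
  · intro h T
    have hr : ω₀ ^ 2 / δ ^ 2 ≤ 1 := by
      rw [div_le_one (by positivity)]
      nlinarith
    have hr0 : 0 ≤ ω₀ ^ 2 / δ ^ 2 := by positivity
    have hc : Real.cos (Real.arccos (-(ω₀ ^ 2 / δ ^ 2))) = -(ω₀ ^ 2 / δ ^ 2) :=
      Real.cos_arccos (by linarith) (by linarith)
    have hT : 2 * T * ω = Real.arccos (-(ω₀ ^ 2 / δ ^ 2)) := by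
      simp only [T]
      field_simp
    constructor
    · intro t ht0 htT
      rw [key2]
      apply div_pos _ (by positivity)
      have hlt : 2 * t * ω < Real.arccos (-(ω₀ ^ 2 / δ ^ 2)) := by
        rw [← hT]
        gcongr
      have := Real.cos_lt_cos_of_nonneg_of_le_pi (by positivity) (Real.arccos_le_pi _) hlt
      rw [hc] at this
      have h5 := mul_lt_mul_of_pos_left this (show 0 < δ ^ 2 by positivity)
      have h6 : δ ^ 2 * -(ω₀ ^ 2 / δ ^ 2) = - ω₀ ^ 2 := by field_simp
      linarith
    · rw [key, hT, hc]
      have : 1 - δ ^ 2 / ω ^ 2 * (1 - -(ω₀ ^ 2 / δ ^ 2)) = 0 := by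
        rw [hω2]
        field_simp
        ring
      rw [this, Complex.ofReal_zero]
end
end
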